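/- Let (G,T) be a bipartite graft, F a minimum join of (G,T), and r ∈ V(G). Let K be a decapital distance component of (G,T) with respect to r, with F-beam e, F-root r_K and F-antiroot s_K. Let r' ∈ V(G)\V(K), and let P be a path between r' and a vertex x ∈ V(K) such that V(P) ∩ V(K) = {x}. Then w_F(P) ≥ dist_F(r', r_K). -/

import Mathlib

/-!
The `F`-weight of `P` is compared with the `F`-weight of a set of edges joining `r'` to `r_K`: the
claim is that `K` contains a set `D` of edges of total `F`-weight `0` whose mod-2 boundary is
`{x, r_K}`. Given `D`, the set `E(P) ∪ D` has boundary `{r', r_K}` and `F`-weight `w_F(P)`. It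
contains a path from `r'` to `r_K`, and what remains has zero boundary, hence nonnegative
`F`-weight because `F` is a minimum join; so the path weighs at most `w_F(P)` (`distF_le`).

To find `D`, put `U = 1_T + δ_r` over `𝔽₂` and call an edge set with boundary `U + δ_z` a
`z`-join, so that `F` is a minimum `r`-join. If `n(z)` is the least size of a `z`-join, then
`dist_F(r, z) = n(z) - n(r)` for `z` reachable from `r`, and distance components are components
of the sublevel sets of `n`.

* `cut_empty` (a form of a theorem of Sebő): if `K` is such a component and `z ∈ K`, then no
  minimum `z`-join meets the cut `δ(K)`. The proof is by induction on the number of edges. Let `b`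
  be a vertex minimising `n`. A minimum join uses at most one edge at `b` (`at_most_one`), and a
  set of edges avoiding `b` whose boundary lies in the neighbourhood of `b` has nonnegative
  weight (`wt_nonneg`; this is where bipartiteness enters, through parity). Hence contracting
  the star of `b` turns minimum joins into minimum joins; every `n(z)` with `z ≠ b` drops by
  exactly one, and components of a level above the lowest stay components of the level below.
  At the lowest level components are single vertices.
* `inner_diff`: let `M` be a minimum `x`-join and let `P₀ ⊆ M ∆ F` be a trail from `r` to the
  first vertex `k` of `K`. Since minimum joins rooted in `K` avoid `δ(K)`, their parts inside and
  outside `K` can be exchanged (`swap_isJn`), and it follows that `F ∆ P₀` is a minimum `k`-join.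
  It avoids `δ(K)`, so the beam lies on `P₀` and `k = r_K`. Both `x` (through the last edge of `P`)
  and `r_K` have a neighbour outside `K`, so both attain the level of `K`, and
  `M` and `F` have equally many edges inside `K`. The part of `M ∆ F` inside `K` is the required `D`.

The abstract part works with multigraphs given by two end maps `s t : ε → V`, because contraction
creates parallel edges.
-/

namespace TightCuts

open SimpleGraph

variable {V : Type*}

/-- `(G, T)` is a graft: every connected component of `G` contains an even
number of vertices of `T`. -/
def IsGraft (G : SimpleGraph V) (T : Set V) : Prop :=
  ∀ c : G.ConnectedComponent, Even ((T ∩ {v | G.connectedComponentMk v = c}).ncard)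

/-- `F` is a join of the graft `(G, T)`: a set of edges such that a vertex is
incident with an odd number of edges of `F` exactly when it lies in `T`. -/
def IsJoin (G : SimpleGraph V) (T : Set V) (F : Set (Sym2 V)) : Prop :=
  F ⊆ G.edgeSet ∧ ∀ v : V, (Odd ({e ∈ F | v ∈ e}).ncard ↔ v ∈ T)

/-- `ν(G, T)`: the minimum size of a join of `(G, T)`. -/
noncomputable def nu (G : SimpleGraph V) (T : Set V) : ℕ :=
  sInf {n | ∃ F : Set (Sym2 V), IsJoin G T F ∧ F.ncard = n}

/-- `F` is a minimum join of `(G, T)`. -/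
def IsMinJoin (G : SimpleGraph V) (T : Set V) (F : Set (Sym2 V)) : Prop :=
  IsJoin G T F ∧ F.ncard = nu G T

open Classical in
/-- The `F`-weight of an edge: `-1` if the edge lies in `F`, `+1` otherwise. -/
noncomputable def edgeWt (F : Set (Sym2 V)) (e : Sym2 V) : ℤ :=
  if e ∈ F then -1 else 1

/-- The `F`-weight of a walk: the sum of the `F`-weights of its edges. -/
noncomputable def walkWt (F : Set (Sym2 V)) {G : SimpleGraph V} {x y : V}
    (p : G.Walk x y) : ℤ :=
  (p.edges.map (edgeWt F)).sum

/-- The `F`-distance between `x` and `y`: the minimum `F`-weight of a path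
between `x` and `y`. -/
noncomputable def distF (G : SimpleGraph V) (F : Set (Sym2 V)) (x y : V) : ℤ :=
  sInf {n : ℤ | ∃ p : G.Walk x y, p.IsPath ∧ walkWt F p = n}

/-- `K` is (the vertex set of) a connected component of the subgraph of `G`
induced by `U`. -/
def IsComponentOf (G : SimpleGraph V) (U K : Set V) : Prop :=
  K.Nonempty ∧ K ⊆ U ∧ (G.induce K).Connected ∧
    ∀ x ∈ K, ∀ y ∈ U, G.Adj x y → y ∈ K

/-- `K` is a distance component of the graft with respect to root `r` at level `i`
(with respect to a minimum join `F`): `i` is attained as an `F`-distance from `r`,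
and `K` is a connected component of the subgraph induced by the vertices at
`F`-distance at most `i` from `r`. -/
def IsDistCompAt (G : SimpleGraph V) (F : Set (Sym2 V)) (r : V) (i : ℤ) (K : Set V) : Prop :=
  (∃ x, distF G F r x = i) ∧ IsComponentOf G {x | distF G F r x ≤ i} K

/-- `K` is a decapital distance component with respect to root `r`: a distance
component (at some level) not containing `r`. -/
def IsDecapDistComp (G : SimpleGraph V) (F : Set (Sym2 V)) (r : V) (K : Set V) : Prop :=
  ∃ i : ℤ, IsDistCompAt G F r i K ∧ r ∉ K

/-- The edge cut `δ_G(K)`: edges of `G` with exactly one end in `K`. -/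
def cutEdges (G : SimpleGraph V) (K : Set V) : Set (Sym2 V) :=
  {e | e ∈ G.edgeSet ∧ ∃ x y, e = s(x, y) ∧ x ∈ K ∧ y ∉ K}

/-- An edge is allowed in `(G, T)` if some minimum join contains it. -/
def Allowed (G : SimpleGraph V) (T : Set V) (e : Sym2 V) : Prop :=
  ∃ F, IsMinJoin G T F ∧ e ∈ F

/-- Two vertices are factor-connected if there is a walk between them all of
whose edges are allowed. -/
def FactorConnected (G : SimpleGraph V) (T : Set V) (u v : V) : Prop :=
  ∃ p : G.Walk u v, ∀ e ∈ p.edges, Allowed G T e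

/-- `C` is (the vertex set of) a factor-component of `(G, T)`: an equivalence
class of factor-connectivity. -/
def IsFactorComponent (G : SimpleGraph V) (T : Set V) (C : Set V) : Prop :=
  ∃ v, C = {u | FactorConnected G T u v}

/-- The Kotzig–Lovász relation: `u ∼ v` iff `u = v`, or `u` and `v` are
factor-connected (hence in the same factor-component) and
`ν(G, T) = ν(G, T Δ {u, v})`. -/
def klRel (G : SimpleGraph V) (T : Set V) (u v : V) : Prop :=
  u = v ∨ (FactorConnected G T u v ∧ nu G T = nu G (symmDiff T {u, v}))

/-- `S` is a Kotzig–Lovász class of `(G, T)`. -/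
def IsKLClass (G : SimpleGraph V) (T : Set V) (S : Set V) : Prop :=
  ∃ v, S = {u | klRel G T u v}

/-- `A(K)` for a distance component `K` at level `i`: the vertices of `K` at
`F`-distance exactly `i` from `r`. -/
def AK (G : SimpleGraph V) (F : Set (Sym2 V)) (r : V) (i : ℤ) (K : Set V) : Set V :=
  K ∩ {x | distF G F r x = i}

/-- `D(K) = V(K) \ A(K)`. -/
def DK (G : SimpleGraph V) (F : Set (Sym2 V)) (r : V) (i : ℤ) (K : Set V) : Set V :=
  K \ AK G F r i K

/-- `S` is the root class of `K`: a Kotzig–Lovász class containing all ends in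
`K` of allowed edges of the cut `δ_G(K)`. -/
def IsRootClass (G : SimpleGraph V) (T : Set V) (K S : Set V) : Prop :=
  IsKLClass G T S ∧ ∀ e ∈ cutEdges G K, Allowed G T e → ∀ u ∈ e, u ∈ K → u ∈ S

/-- `S` is the antiroot class of `K`: a Kotzig–Lovász class containing all ends
outside `K` of allowed edges of the cut `δ_G(K)`. -/
def IsAntirootClass (G : SimpleGraph V) (T : Set V) (K S : Set V) : Prop :=
  IsKLClass G T S ∧ ∀ e ∈ cutEdges G K, Allowed G T e → ∀ u ∈ e, u ∉ K → u ∈ S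

/-- The family `𝒜(K)`: the root fragment `K ∩ S_K` together with all
Kotzig–Lovász classes other than `S_K` that contain a vertex of `A(K)`. -/
def famA (G : SimpleGraph V) (T : Set V) (F : Set (Sym2 V)) (r : V) (i : ℤ)
    (K S_K : Set V) : Set (Set V) :=
  insert (K ∩ S_K) {S | IsKLClass G T S ∧ S ≠ S_K ∧ (S ∩ AK G F r i K).Nonempty}

/-- `L` is adjacent to a vertex of `S` by an allowed edge. -/
def AdjAllowed (G : SimpleGraph V) (T : Set V) (L S : Set V) : Prop :=
  ∃ x ∈ L, ∃ s ∈ S, G.Adj x s ∧ Allowed G T s(x, s)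

/-- `𝒩_K(S)`: the family of connected components of `G[D(K)]` adjacent to a
vertex of `S` by an allowed edge. -/
def NKfam (G : SimpleGraph V) (T : Set V) (F : Set (Sym2 V)) (r : V) (i : ℤ)
    (K S : Set V) : Set (Set V) :=
  {L | IsComponentOf G (DK G F r i K) L ∧ AdjAllowed G T L S}

/-- `U_K(S)`: the union of the vertex sets of the members of `𝒩_K(S)`. -/
def UK (G : SimpleGraph V) (T : Set V) (F : Set (Sym2 V)) (r : V) (i : ℤ)
    (K S : Set V) : Set V :=
  ⋃₀ NKfam G T F r i K S

/-- `X` is an `F`-negative set for `S`: `X` is disjoint from `S` and every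
`x ∈ X` admits a path of negative `F`-weight from `x` to a vertex of `S` whose
vertices, except the end in `S`, all lie in `X`. -/
def IsNegSet (G : SimpleGraph V) (F : Set (Sym2 V)) (S X : Set V) : Prop :=
  X ⊆ Sᶜ ∧ ∀ x ∈ X, ∃ y ∈ S, ∃ p : G.Walk x y, p.IsPath ∧ walkWt F p < 0 ∧
    ∀ v ∈ p.support, v ≠ y → v ∈ X

/-- The maximum `F`-negative set for `S`: the union of all `F`-negative sets
for `S`. -/
def maxNegSet (G : SimpleGraph V) (F : Set (Sym2 V)) (S : Set V) : Set V :=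
  ⋃₀ {X | IsNegSet G F S X}

/-- The maximum `F`-negative set for `S` avoiding `Y`. -/
def maxNegSetAvoiding (G : SimpleGraph V) (F : Set (Sym2 V)) (S Y : Set V) : Set V :=
  ⋃₀ {X | IsNegSet G F S X ∧ Disjoint X Y}

/-! ### Edge sets of multigraphs and their boundaries -/

section Abstract

variable {V ε : Type*} [DecidableEq V] [DecidableEq ε]

/-- The mod-2 boundary of the edge set `J`: the sum of the two ends of each edge, so that a loop
contributes nothing. The edge `e` of the multigraph has ends `s e` and `t e`. -/
def bd (s t : ε → V) (J : Finset ε) : V → ZMod 2 :=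
  ∑ e ∈ J, (Pi.single (s e) 1 + Pi.single (t e) 1)

/-- The `J`-weight of the edge set `X`. -/
def wt (J X : Finset ε) : ℤ := ∑ e ∈ X, if e ∈ J then -1 else 1

/-- `J` is a `z`-join: a set of edges from `E` with boundary `U + δ_z`. Varying `z` with `U` fixed
encodes the minimum joins of all the grafts `(G, T ∆ {r, z})` at once. -/
def IsJn (s t : ε → V) (E : Finset ε) (U : V → ZMod 2) (z : V) (J : Finset ε) : Prop :=
  J ⊆ E ∧ bd s t J = U + Pi.single z 1

/-- `J` is a minimum `z`-join. -/
def Opt (s t : ε → V) (E : Finset ε) (U : V → ZMod 2) (z : V) (J : Finset ε) : Prop :=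
  IsJn s t E U z J ∧ ∀ J', IsJn s t E U z J' → J.card ≤ J'.card

/-- The edge `e` has ends `x` and `y`. -/
def Ends (s t : ε → V) (e : ε) (x y : V) : Prop :=
  (s e = x ∧ t e = y) ∨ (t e = x ∧ s e = y)

omit [DecidableEq V] [DecidableEq ε] in
lemma add_self_fun (f : V → ZMod 2) : f + f = 0 := by
  ext v; exact CharTwo.add_self_eq_zero _

lemma bd_union {s t : ε → V} {J X : Finset ε} (h : Disjoint J X) :
    bd s t (J ∪ X) = bd s t J + bd s t X := Finset.sum_union h

lemma bd_symmDiff (s t : ε → V) (J X : Finset ε) :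
    bd s t (symmDiff J X) = bd s t J + bd s t X := by
  have h1 : bd s t (J \ X) + bd s t (J ∩ X) = bd s t J := by
    rw [← bd_union (Finset.disjoint_sdiff_inter J X), Finset.sdiff_union_inter]
  have h2 : bd s t (X \ J) + bd s t (J ∩ X) = bd s t X := by
    rw [Finset.inter_comm, ← bd_union (Finset.disjoint_sdiff_inter X J), Finset.sdiff_union_inter]
  have h3 : bd s t (symmDiff J X) = bd s t (J \ X) + bd s t (X \ J) := by
    rw [← bd_union (disjoint_sdiff_sdiff)]; rfl
  rw [h3, ← h1, ← h2]
  have := add_self_fun (bd s t (J ∩ X))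
  calc _ = bd s t (J \ X) + bd s t (X \ J) + 0 := by rw [add_zero]
    _ = _ := by rw [← this]; abel

omit [DecidableEq ε] in
lemma bd_singleton {s t : ε → V} {e : ε} {x y : V} (h : Ends s t e x y) :
    bd s t {e} = Pi.single x 1 + Pi.single y 1 := by
  rcases h with ⟨rfl, rfl⟩ | ⟨rfl, rfl⟩
  · simp [bd]
  · simp [bd, add_comm]

omit [DecidableEq ε] in
lemma exists_inc {s t : ε → V} {D : Finset ε} {w : V} (h : bd s t D w ≠ 0) :
    ∃ e ∈ D, ∃ y, Ends s t e w y := by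
  by_contra! hc
  apply h
  rw [bd, Finset.sum_apply]
  refine Finset.sum_eq_zero fun e he => ?_
  have h1 : s e ≠ w := fun h' => hc e he (t e) (Or.inl ⟨h', rfl⟩)
  have h2 : t e ≠ w := fun h' => hc e he (s e) (Or.inr ⟨h', rfl⟩)
  simp [h1.symm, h2.symm]

omit [DecidableEq V] in
lemma wt_union {J X Y : Finset ε} (h : Disjoint X Y) : wt J (X ∪ Y) = wt J X + wt J Y :=
  Finset.sum_union h

omit [DecidableEq V] in
/-- The identity relating weights to sizes of joins; nonnegativity of the weight of a set with zero
boundary and the distance formula are both read off from it. -/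
lemma card_symmDiff_wt (J X : Finset ε) : ((symmDiff J X).card : ℤ) = J.card + wt J X := by
  have h1 : ((symmDiff J X).card : ℤ) = (J \ X).card + (X \ J).card := by
    have : symmDiff J X = (J \ X) ∪ (X \ J) := rfl
    rw [this, Finset.card_union_of_disjoint disjoint_sdiff_sdiff]; push_cast; rfl
  have h2 : wt J X = wt J (X \ J) + wt J (X ∩ J) := by
    rw [← wt_union (Finset.disjoint_sdiff_inter X J), Finset.sdiff_union_inter]
  have h3 : wt J (X \ J) = (X \ J).card := by
    rw [wt, Finset.sum_congr rfl (g := fun _ => (1 : ℤ))]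
    · simp
    · intro e he; simp [(Finset.mem_sdiff.1 he).2]
  have h4 : wt J (X ∩ J) = -(X ∩ J).card := by
    rw [wt, Finset.sum_congr rfl (g := fun _ => (-1 : ℤ))]
    · simp
    · intro e he; simp [(Finset.mem_inter.1 he).2]
  have h5 : (J.card : ℤ) = (J \ X).card + (X ∩ J).card := by
    rw [Finset.inter_comm]; exact_mod_cast (Finset.card_sdiff_add_card_inter J X).symm
  omega

omit [DecidableEq V] in
lemma wt_neg {J M P : Finset ε} (h : P ⊆ symmDiff M J) : wt M P = - wt J P := by
  rw [wt, wt, ← Finset.sum_neg_distrib]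
  refine Finset.sum_congr rfl fun e he => ?_
  have := Finset.mem_symmDiff.1 (h he)
  rcases this with ⟨a, b⟩ | ⟨a, b⟩ <;> simp [a, b]

/-- Adding an edge set with boundary `{z, y}` moves the root of a join from `z` to `y`. -/
lemma IsJn.sd {s t : ε → V} {E : Finset ε} {U : V → ZMod 2} {z y : V} {J X : Finset ε}
    (h : IsJn s t E U z J) (hX : X ⊆ E) (hb : bd s t X = Pi.single z 1 + Pi.single y 1) :
    IsJn s t E U y (symmDiff J X) := by
  refine ⟨?_, ?_⟩
  · intro e he
    rcases Finset.mem_symmDiff.1 he with h1 | h1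
    · exact h.1 h1.1
    · exact hX h1.1
  · rw [bd_symmDiff, h.2, hb]
    have := add_self_fun (Pi.single z 1 : V → ZMod 2)
    calc _ = U + (Pi.single z 1 + Pi.single z 1) + Pi.single y 1 := by abel
      _ = _ := by rw [this, add_zero]

lemma IsJn.sd0 {s t : ε → V} {E : Finset ε} {U : V → ZMod 2} {z : V} {J X : Finset ε}
    (h : IsJn s t E U z J) (hX : X ⊆ E) (hb : bd s t X = 0) :
    IsJn s t E U z (symmDiff J X) :=
  h.sd hX (by rw [hb, add_self_fun])

lemma bd_join_diff {s t : ε → V} {E : Finset ε} {U : V → ZMod 2} {x y : V} {M J : Finset ε}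
    (hM : IsJn s t E U x M) (hJ : IsJn s t E U y J) :
    bd s t (symmDiff M J) = Pi.single y 1 + Pi.single x 1 := by
  rw [bd_symmDiff, hM.2, hJ.2]
  calc _ = (U + U) + (Pi.single y 1 + Pi.single x 1) := by abel
    _ = _ := by rw [add_self_fun, zero_add]

omit [DecidableEq ε] in
lemma exists_opt {s t : ε → V} {E : Finset ε} {U : V → ZMod 2} {z : V} {J : Finset ε}
    (h : IsJn s t E U z J) : ∃ J', Opt s t E U z J' ∧ J'.card ≤ J.card := by
  induction hn : J.card using Nat.strong_induction_on generalizing J with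
  | _ n ih =>
    by_cases ho : Opt s t E U z J
    · exact ⟨J, ho, hn.le⟩
    · have : ∃ J', IsJn s t E U z J' ∧ J'.card < J.card := by
        by_contra! hc; exact ho ⟨h, hc⟩
      obtain ⟨J', h1, h2⟩ := this
      obtain ⟨J'', h3, h4⟩ := ih _ (hn ▸ h2) h1 rfl
      exact ⟨J'', h3, by omega⟩

/-- If `w ∉ S` is the only point outside `S` at which `D` has odd degree, then following edges of `D`
from `w` leads to `S`. The edges `P` used until the first vertex `w'` of `S` have boundary
`{w, w'}`, and only the last one, `e₀`, touches `S`. -/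
lemma trail (s t : ε → V) (S : Set V) (D : Finset ε) (w : V) (hw : w ∉ S) (hDw : bd s t D w ≠ 0)
    (hD : ∀ v, bd s t D v ≠ 0 → v ∈ S ∨ v = w) :
    ∃ P ⊆ D, ∃ w' ∈ S, bd s t P = Pi.single w 1 + Pi.single w' 1 ∧
      ∃ e₀ ∈ P, ∃ y, Ends s t e₀ w' y ∧ y ∉ S ∧
        ∀ e ∈ P, e ≠ e₀ → s e ∉ S ∧ t e ∉ S := by
  induction hn : D.card generalizing D w with
  | zero => simp [Finset.card_eq_zero.1 hn, bd] at hDw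
  | succ n ih =>
    obtain ⟨e, he, w₁, hew⟩ := exists_inc hDw
    by_cases hw₁ : w₁ ∈ S
    · refine ⟨{e}, by simpa using he, w₁, hw₁, bd_singleton hew, e, by simp, w, ?_, hw, by simp⟩
      rcases hew with ⟨h1, h2⟩ | ⟨h1, h2⟩
      · exact Or.inr ⟨h2, h1⟩
      · exact Or.inl ⟨h2, h1⟩
    · have hsplit : bd s t D = Pi.single w 1 + Pi.single w₁ 1 + bd s t (D.erase e) := by
        rw [← bd_singleton hew, ← bd_union (by simp)]
        congr 1
        rw [← Finset.insert_eq, Finset.insert_erase he]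
      have hv : ∀ v, bd s t (D.erase e) v =
          bd s t D v + (Pi.single w 1 : V → ZMod 2) v + (Pi.single w₁ 1 : V → ZMod 2) v := by
        intro v
        have := congrFun hsplit v
        simp only [Pi.add_apply] at this
        generalize bd s t D v = a at *
        generalize bd s t (D.erase e) v = b at *
        generalize (Pi.single w 1 : V → ZMod 2) v = c at *
        generalize (Pi.single w₁ 1 : V → ZMod 2) v = d at *
        subst this; clear * -; revert b c d; decide
      have hone : ∀ a : ZMod 2, a ≠ 0 → a = 1 := by decide
      have h1 := hone _ hDw
      have key1 : bd s t (D.erase e) w₁ ≠ 0 := by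
        rw [hv]
        by_cases h : w₁ = w
        · subst h; rw [h1]; simp; decide
        · have : bd s t D w₁ = 0 := by
            by_contra h0; exact (hD _ h0).elim hw₁ h
          simp [this, h]
      have key2 : ∀ v, bd s t (D.erase e) v ≠ 0 → v ∈ S ∨ v = w₁ := by
        intro v hv0
        by_contra! hc
        apply hv0
        rw [hv]
        by_cases h : v = w
        · subst h; rw [h1]; simp [hc.2]; decide
        · have : bd s t D v = 0 := by
            by_contra h0; exact (hD _ h0).elim hc.1 h
          simp [this, h, hc.2]
      obtain ⟨P, hP, w', hw', hbP, e₀, he₀, y, hy, hyS, hall⟩ := ih (D.erase e) w₁ hw₁ key1 key2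
        (by rw [Finset.card_erase_of_mem he, hn]; rfl)
      have heP : e ∉ P := fun h => by simpa using hP h
      refine ⟨insert e P, ?_, w', hw', ?_, e₀, by simp [he₀], y, hy, hyS, ?_⟩
      · intro f hf
        rcases Finset.mem_insert.1 hf with rfl | hf
        · exact he
        · exact Finset.mem_of_mem_erase (hP hf)
      · rw [Finset.insert_eq, bd_union (by simpa using heP), bd_singleton hew, hbP]
        have := add_self_fun (Pi.single w₁ 1 : V → ZMod 2)
        calc _ = Pi.single w 1 + (Pi.single w₁ 1 + Pi.single w₁ 1) + Pi.single w' 1 := by abel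
          _ = _ := by rw [this, add_zero]
      · intro f hf hne
        rcases Finset.mem_insert.1 hf with rfl | hf
        · rcases hew with ⟨h1, h2⟩ | ⟨h1, h2⟩ <;> rw [h1, h2] <;> exact ⟨by assumption, by assumption⟩
        · exact hall f hf hne

/-! ### Minimum joins near a vertex of lowest level -/

/-- A join that is shortest among the joins for all roots uses no edge at its root: deleting such
an edge would give a shorter join, rooted at the other end. -/
lemma no_edge {s t : ε → V} {E : Finset ε} {U : V → ZMod 2} {b : V} {M : Finset ε}
    (hM : IsJn s t E U b M) (hmin : ∀ z J, IsJn s t E U z J → M.card ≤ J.card)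
    {e : ε} (he : e ∈ M) {y : V} : ¬ Ends s t e b y := by
  intro h
  have h1 := hM.sd (X := {e}) (by simpa using hM.1 he) (bd_singleton h)
  have h2 := hmin _ _ h1
  have h3 : symmDiff M {e} = M.erase e := by
    ext f; simp only [Finset.mem_symmDiff, Finset.mem_singleton, Finset.mem_erase]
    constructor
    · rintro (h | ⟨rfl, h'⟩)
      · exact ⟨h.2, h.1⟩
      · exact absurd he h'
    · rintro ⟨h, h'⟩; exact Or.inl ⟨h', h⟩
  rw [h3, Finset.card_erase_of_mem he] at h2
  have := Finset.card_pos.2 ⟨e, he⟩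
  omega

/-- With `b` a vertex of lowest level, a minimum join `J` has at most one edge at `b`. Exchanging along
a trail of `M ∆ J` from the root of `J` to `b` makes `J` a shortest `b`-join, which has no edge at
`b`; so all edges of `J` at `b` lie on the trail, and the trail has only its last edge there. -/
lemma at_most_one {s t : ε → V} {E : Finset ε} {U : V → ZMod 2} {b z : V} {M J : Finset ε}
    (hM : IsJn s t E U b M) (hmin : ∀ z J, IsJn s t E U z J → M.card ≤ J.card)
    (hJ : Opt s t E U z J) {e f : ε} (he : e ∈ J) (hf : f ∈ J) {x y : V}
    (hex : Ends s t e b x) (hfy : Ends s t f b y) : e = f := by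
  by_cases hz : z = b
  · subst hz
    exact absurd hex (no_edge hJ.1 (fun z' J' h => (hJ.2 _ hM).trans (hmin _ _ h)) he)
  have hD := bd_join_diff hM hJ.1
  obtain ⟨P, hPD, w', hw', hbP, e₀, he₀, -, -, -, hall⟩ := trail s t {b} (symmDiff M J) z
    (by simpa using hz) (by rw [hD]; simp [hz])
    (by intro v hv
        by_contra! hc
        apply hv
        have h1 : v ≠ b := hc.1
        rw [hD]; simp [hc.2, h1])
  obtain rfl : w' = b := hw'
  have hPE : P ⊆ E := fun e he => by
    rcases Finset.mem_symmDiff.1 (hPD he) with h | h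
    · exact hM.1 h.1
    · exact hJ.1.1 h.1
  have j1 := hJ.1.sd hPE hbP
  have j2 := hM.sd hPE (hbP.trans (add_comm _ _))
  have c1 := card_symmDiff_wt J P
  have c2 := card_symmDiff_wt M P
  rw [wt_neg hPD] at c2
  have c3 := hJ.2 _ j2
  have key : ∀ g ∈ J, ∀ y, Ends s t g w' y → g = e₀ := by
    intro g hg y hgy
    have hgP : g ∈ P := by
      by_contra hgP
      refine no_edge j1 (fun z' J' h => le_trans ?_ (hmin _ _ h))
        (Finset.mem_symmDiff.2 (Or.inl ⟨hg, hgP⟩)) hgy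
      omega
    by_contra hne
    have := hall g hgP hne
    rcases hgy with ⟨h, -⟩ | ⟨h, -⟩
    · exact this.1 h
    · exact this.2 h
  rw [key e he _ hex, key f hf _ hfy]

omit [DecidableEq ε] in
/-- In a bipartite multigraph the parity of the size of an edge set is determined by its boundary. -/
lemma parity [Fintype V] {s t : ε → V} {E : Finset ε} {col : V → ZMod 2}
    (hcol : ∀ e ∈ E, col (s e) + col (t e) = 1) {X : Finset ε} (hX : X ⊆ E) :
    (X.card : ZMod 2) = ∑ v, col v * bd s t X v := by
  have : ∀ v, col v * bd s t X v =
      ∑ e ∈ X, col v * ((Pi.single (s e) 1 : V → ZMod 2) v + (Pi.single (t e) 1 : V → ZMod 2) v) := by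
    intro v; rw [bd, Finset.sum_apply, Finset.mul_sum]; rfl
  simp_rw [this]
  rw [Finset.sum_comm, Finset.card_eq_sum_ones]
  push_cast
  refine Finset.sum_congr rfl fun e he => ?_
  simp_rw [mul_add, Finset.sum_add_distrib]
  simp only [Pi.single_apply, mul_ite, mul_one, mul_zero, Finset.sum_ite_eq', Finset.mem_univ, if_true]
  exact (hcol e (hX he)).symm

omit [DecidableEq V] in
lemma wt_parity (J X : Finset ε) : ((wt J X : ℤ) : ZMod 2) = X.card := by
  rw [wt, Finset.card_eq_sum_ones]
  push_cast
  refine Finset.sum_congr rfl fun e _ => ?_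
  split_ifs <;> decide

/-- With `b` a vertex of lowest level, an edge set avoiding `b` whose boundary lies in the neighbourhood
of `b` has nonnegative weight with respect to any minimum join. Trails between two boundary
points are closed up by two edges at `b` into a set with zero boundary. -/
lemma wt_nonneg [Fintype V] {s t : ε → V} {E : Finset ε} {U : V → ZMod 2} {col : V → ZMod 2}
    (hcol : ∀ e ∈ E, col (s e) + col (t e) = 1) {b z : V} {M J : Finset ε}
    (hM : IsJn s t E U b M) (hmin : ∀ z J, IsJn s t E U z J → M.card ≤ J.card)
    (hJ : Opt s t E U z J) (D : Finset ε) (hDE : D ⊆ E) (hDb : ∀ e ∈ D, ∀ y, ¬ Ends s t e b y)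
    (hDN : ∀ v, bd s t D v ≠ 0 → ∃ f ∈ E, Ends s t f b v) : 0 ≤ wt J D := by
  induction hn : D.card using Nat.strong_induction_on generalizing D with
  | _ n ih =>
  have closed : ∀ X ⊆ E, bd s t X = 0 → 0 ≤ wt J X := by
    intro X hX h0
    have h1 := hJ.2 _ (hJ.1.sd0 hX h0)
    have h2 := card_symmDiff_wt J X
    omega
  by_cases h0 : bd s t D = 0
  · exact closed D hDE h0
  · obtain ⟨w, hw⟩ := Function.ne_iff.1 h0
    have hw : bd s t D w ≠ 0 := hw
    obtain ⟨P, hPD, w', ⟨hw', hne⟩, hbP, e₀, he₀, -⟩ := trail s t {v | bd s t D v ≠ 0 ∧ v ≠ w} D w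
      (by simp) hw (by intro v hv; by_cases h : v = w
                       · exact Or.inr h
                       · exact Or.inl ⟨hv, h⟩)
    obtain ⟨f, hfE, hf⟩ := hDN w hw
    obtain ⟨f', hfE', hf'⟩ := hDN w' hw'
    have hff : f ≠ f' := by
      rintro rfl
      have hb : col b + col w = 1 := by
        have := hcol f hfE
        rcases hf with ⟨h1, h2⟩ | ⟨h1, h2⟩ <;> rw [h1, h2] at this
        · exact this
        · rwa [add_comm]
      have hwb : w ≠ b := by
        rintro rfl; rw [CharTwo.add_self_eq_zero] at hb; exact absurd hb (by decide)
      apply hne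
      rcases hf with ⟨h1, h2⟩ | ⟨h1, h2⟩ <;> rcases hf' with ⟨h3, h4⟩ | ⟨h3, h4⟩
      · rw [← h4, ← h2]
      · exact absurd (h2.symm.trans h3) hwb
      · exact absurd (h2.symm.trans h3) hwb
      · rw [← h4, ← h2]
    have hfP : f ∉ P := fun h => hDb f (hPD h) _ hf
    have hfP' : f' ∉ P := fun h => hDb f' (hPD h) _ hf'
    have hd1 : Disjoint ({f, f'} : Finset ε) P := by
      rw [Finset.disjoint_left]; intro g hg
      rcases Finset.mem_insert.1 hg with rfl | hg
      · exact hfP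
      · rw [Finset.mem_singleton.1 hg]; exact hfP'
    have hd2 : Disjoint ({f} : Finset ε) {f'} := by simpa using hff
    set X : Finset ε := {f, f'} ∪ P with hXdef
    have hXE : X ⊆ E := by
      intro g hg
      rcases Finset.mem_union.1 hg with hg | hg
      · rcases Finset.mem_insert.1 hg with rfl | hg
        · exact hfE
        · rw [Finset.mem_singleton.1 hg]; exact hfE'
      · exact hDE (hPD hg)
    have hbX : bd s t X = 0 := by
      rw [hXdef, bd_union hd1, Finset.insert_eq, bd_union hd2, bd_singleton hf, bd_singleton hf', hbP]
      calc _ = (Pi.single b 1 + Pi.single b 1) + (Pi.single w 1 + Pi.single w 1)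
            + (Pi.single w' 1 + Pi.single w' 1) := by abel
        _ = _ := by simp only [add_self_fun, add_zero]
    have hwX : wt J X = (if f ∈ J then -1 else 1) + (if f' ∈ J then -1 else 1) + wt J P := by
      rw [hXdef, wt_union hd1, Finset.insert_eq, wt_union hd2]; simp [wt]
    have hX0 := closed X hXE hbX
    have hP0 : 0 ≤ wt J P := by
      by_cases h1 : f ∈ J
      · rw [hwX, if_pos h1] at hX0; split_ifs at hX0 <;> omega
      by_cases h2 : f' ∈ J
      · rw [hwX, if_pos h2] at hX0; split_ifs at hX0 <;> omega
      -- If the closed-up trail had weight `0`, its symmetric difference with `J` would be a minimum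
      -- join with two edges at `b`. Its weight is even, hence at least `2`.
      have hpos : wt J X ≠ 0 := by
        intro hz
        have hj := hJ.1.sd0 hXE hbX
        have hc := card_symmDiff_wt J X
        have ho : Opt s t E U z (symmDiff J X) :=
          ⟨hj, fun J' h => le_trans (by omega) (hJ.2 J' h)⟩
        refine hff (at_most_one hM hmin ho ?_ ?_ hf hf')
        · exact Finset.mem_symmDiff.2 (Or.inr ⟨by simp [hXdef], h1⟩)
        · exact Finset.mem_symmDiff.2 (Or.inr ⟨by simp [hXdef], h2⟩)
      have heven : ((wt J X : ℤ) : ZMod 2) = 0 := by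
        rw [wt_parity, parity hcol hXE, hbX]; simp
      have h2d := (ZMod.intCast_zmod_eq_zero_iff_dvd _ 2).1 heven
      rw [if_neg h1, if_neg h2] at hwX
      push_cast at h2d
      omega
    have hlt : (D \ P).card < n := by
      rw [← hn]; exact Finset.card_lt_card (Finset.sdiff_ssubset hPD ⟨e₀, he₀⟩)
    have hbD : bd s t D = bd s t (D \ P) + bd s t P := by
      rw [← bd_union Finset.sdiff_disjoint, Finset.sdiff_union_of_subset hPD]
    have hrest := ih _ hlt (D \ P) (Finset.sdiff_subset.trans hDE)
      (fun e he => hDb e (Finset.mem_sdiff.1 he).1)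
      (by intro v hv
          by_cases hvw : v = w
          · exact hvw ▸ ⟨f, hfE, hf⟩
          by_cases hvw' : v = w'
          · exact hvw' ▸ ⟨f', hfE', hf'⟩
          apply hDN
          rw [hbD, hbP]; simpa [hvw, hvw'] using hv) rfl
    have : wt J D = wt J (D \ P) + wt J P := by
      rw [← wt_union Finset.sdiff_disjoint, Finset.sdiff_union_of_subset hPD]
    omega

/-! ### Level components and the contraction argument -/

/-- The vertex `z` has level at most `c`: some `z`-join has size at most `c`. -/
def Lev (s t : ε → V) (E : Finset ε) (U : V → ZMod 2) (c : ℕ) (z : V) : Prop :=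
  ∃ J, IsJn s t E U z J ∧ J.card ≤ c

/-- `K` is connected, of level at most `c`, and closed under passing to neighbours of level at most `c`.
Connectedness is expressed by the absence of a nontrivial subset closed under the edges inside
`K`, and `K` may be empty. -/
structure IsComp (s t : ε → V) (E : Finset ε) (U : V → ZMod 2) (c : ℕ) (K : Set V) : Prop where
  lev : ∀ z ∈ K, Lev s t E U c z
  conn : ∀ X : Set V, (∃ x ∈ K, x ∈ X) →
    (∀ e ∈ E, s e ∈ K → t e ∈ K → (s e ∈ X ↔ t e ∈ X)) → K ⊆ X
  closed : ∀ e ∈ E, ∀ x y, Ends s t e x y → x ∈ K → Lev s t E U c y → y ∈ K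

/-- Levels of adjacent vertices differ by at most one. -/
lemma lev_step {s t : ε → V} {E : Finset ε} {U : V → ZMod 2} {c : ℕ} {x y : V}
    (h : Lev s t E U c x) {e : ε} (he : e ∈ E) (hxy : Ends s t e x y) :
    Lev s t E U (c + 1) y := by
  obtain ⟨J, hJ, hc⟩ := h
  refine ⟨_, hJ.sd (X := {e}) (by simpa using he) (bd_singleton hxy), ?_⟩
  have h1 := card_symmDiff_wt J {e}
  have h2 : wt J {e} ≤ 1 := by rw [wt]; simp only [Finset.sum_singleton]; split_ifs <;> simp
  omega

omit [DecidableEq V] [DecidableEq ε] in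
lemma Ends.symm {s t : ε → V} {e : ε} {x y : V} (h : Ends s t e x y) : Ends s t e y x := by
  rcases h with ⟨h1, h2⟩ | ⟨h1, h2⟩
  · exact Or.inr ⟨h2, h1⟩
  · exact Or.inl ⟨h2, h1⟩

omit [DecidableEq V] [DecidableEq ε] in
lemma Ends.map {s t : ε → V} {e : ε} {x y : V} (h : Ends s t e x y) (f : V → V) :
    Ends (f ∘ s) (f ∘ t) e (f x) (f y) :=
  h.imp (fun h => ⟨congrArg f h.1, congrArg f h.2⟩) (fun h => ⟨congrArg f h.1, congrArg f h.2⟩)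

/-- The push-forward of an `𝔽₂`-valued function on vertices along `f`. -/
def push [Fintype V] (f : V → V) (g : V → ZMod 2) : V → ZMod 2 :=
  fun v => ∑ u, if f u = v then g u else 0

omit [DecidableEq ε] in
lemma push_add [Fintype V] (f : V → V) (g h : V → ZMod 2) :
    push f (g + h) = push f g + push f h := by
  ext v; simp only [push, Pi.add_apply, ← Finset.sum_add_distrib]
  exact Finset.sum_congr rfl fun u _ => by split_ifs <;> simp

omit [DecidableEq ε] in
lemma push_single [Fintype V] (f : V → V) (x : V) :
    push f (Pi.single x 1) = Pi.single (f x) 1 := by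
  ext v
  rw [push, Finset.sum_eq_single x]
  · simp [Pi.single_apply, eq_comm]
  · intro u _ hu; simp [hu]
  · simp

lemma bd_push [Fintype V] (s t : ε → V) (f : V → V) (J : Finset ε) :
    bd (f ∘ s) (f ∘ t) J = push f (bd s t J) := by
  induction J using Finset.induction_on with
  | empty => ext v; simp [bd, push]
  | insert e J he ih =>
    have h1 : Disjoint ({e} : Finset ε) J := by simpa using he
    have h2 : Ends s t e (s e) (t e) := Or.inl ⟨rfl, rfl⟩
    rw [Finset.insert_eq, bd_union h1, bd_union h1, push_add, ih, bd_singleton h2,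
      bd_singleton (h2.map f), push_add, push_single, push_single]

omit [DecidableEq ε] in
lemma push_apply_of_unique [Fintype V] (f : V → V) (g : V → ZMod 2) (v : V)
    (h : ∀ u, f u = v ↔ u = v) : push f g v = g v := by
  simp [push, h]

/-- Minimum joins rooted in a level component `K` have no edge in the cut of `K`. -/
theorem cut_empty [Fintype V] (s t : ε → V) (E : Finset ε) (U : V → ZMod 2) (col : V → ZMod 2)
    (hcol : ∀ e ∈ E, col (s e) + col (t e) = 1) (c : ℕ) (K : Set V) (hK : IsComp s t E U c K)
    (z : V) (hz : z ∈ K) (J : Finset ε) (hJ : Opt s t E U z J) :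
    ∀ e ∈ J, ∀ x y, Ends s t e x y → x ∈ K → y ∈ K := by
  classical
  induction hn : E.card using Nat.strong_induction_on generalizing s t E U col c K z J with
  | _ n ih =>
  -- a globally shortest join
  obtain ⟨b, M, hM, hmin⟩ : ∃ b M, IsJn s t E U b M ∧
      ∀ z J, IsJn s t E U z J → M.card ≤ J.card := by
    have hex : ∃ m, ∃ z J, IsJn s t E U z J ∧ J.card = m := ⟨_, z, J, hJ.1, rfl⟩
    obtain ⟨b, M, h1, h2⟩ := Nat.find_spec hex
    exact ⟨b, M, h1, fun z J h => h2 ▸ Nat.find_min' hex ⟨z, J, h, rfl⟩⟩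
  have cardpar : ∀ {x : V} {N : Finset ε}, IsJn s t E U x N →
      (N.card : ZMod 2) = (∑ v, col v * U v) + col x := by
    intro x N hN
    rw [parity hcol hN.1, hN.2]
    simp [mul_add, Finset.sum_add_distrib, Pi.single_apply]
  have hJc : J.card ≤ c := by
    obtain ⟨J', h1, h2⟩ := hK.lev z hz
    exact (hJ.2 _ h1).trans h2
  by_cases hc : c ≤ M.card
  -- lowest level: adjacent vertices have levels of different parity, so `K` is a single vertex
  · have hKz : K ⊆ {z} := by
      refine hK.conn {z} ⟨z, hz, rfl⟩ fun e he h1 h2 => ?_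
      exfalso
      obtain ⟨J1, h3, h4⟩ := hK.lev _ h1
      obtain ⟨J2, h5, h6⟩ := hK.lev _ h2
      have h7 : J1.card = J2.card := by
        have := hmin _ _ h3
        have := hmin _ _ h5
        omega
      have h8 := cardpar h3
      rw [h7, cardpar h5] at h8
      have h9 := hcol e he
      rw [← add_left_cancel h8, CharTwo.add_self_eq_zero] at h9
      exact absurd h9 (by decide)
    intro e he x y hxy hx
    obtain rfl : x = z := hKz hx
    exact absurd hxy (no_edge hJ.1 (fun z' J' h => by have := hmin _ _ h; omega) he)
  -- if `b` is isolated, then `b` is the only vertex at which any join is rooted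
  by_cases hiso : ∀ e ∈ E, ∀ y, ¬ Ends s t e b y
  · have key : ∀ {x N}, IsJn s t E U x N → x = b := by
      intro x N hN
      by_contra hne
      have h1 : ∀ {N}, N ⊆ E → bd s t N b = 0 := by
        intro N hN
        by_contra h
        obtain ⟨e, he, y, hy⟩ := exists_inc h
        exact hiso e (hN he) y hy
      have h2 := h1 hN.1
      have h3 := h1 hM.1
      rw [hN.2] at h2
      rw [hM.2] at h3
      have hne' : b ≠ x := fun h => hne h.symm
      simp [hne'] at h2
      simp [h2] at h3
    intro e he x y hxy hx
    obtain ⟨N, hN, -⟩ := hK.lev x hx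
    obtain rfl := key hN
    exact absurd hxy (hiso e (hJ.1.1 he) y)
  -- contraction of the star of `b`
  set π : V → V := fun v => if ∃ f ∈ E, Ends s t f b v then b else v with hπ
  set E' := E.filter (fun e => s e ≠ b ∧ t e ≠ b) with hE'
  have hE'E : E' ⊆ E := Finset.filter_subset _ _
  have hπb : π b = b := by simp [hπ]
  have hπN : ∀ {f v}, f ∈ E → Ends s t f b v → π v = b := by
    intro f v hf hv; simp only [hπ]; rw [if_pos ⟨f, hf, hv⟩]
  have hπeq : ∀ v, π v = v ∨ (π v = b ∧ ∃ f ∈ E, Ends s t f b v) := by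
    intro v; simp only [hπ]; split_ifs with h
    · exact Or.inr ⟨rfl, h⟩
    · exact Or.inl rfl
  have hlt : E'.card < n := by
    rw [← hn]
    push Not at hiso
    obtain ⟨e, he, y, hy⟩ := hiso
    refine Finset.card_lt_card (Finset.filter_ssubset.2 ⟨e, he, ?_⟩)
    rintro ⟨h1, h2⟩
    rcases hy with h | h
    · exact h1 h.1
    · exact h2 h.1
  have hcol' : ∀ e ∈ E', (Function.update col b (col b + 1)) ((π ∘ s) e) +
      (Function.update col b (col b + 1)) ((π ∘ t) e) = 1 := by
    have h1 : ∀ v, v ≠ b → (Function.update col b (col b + 1)) (π v) = col v := by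
      intro v hv
      rcases hπeq v with h | ⟨h, f, hf, hfv⟩
      · rw [h, Function.update_of_ne hv]
      · rw [h, Function.update_self]
        have : col b + col v = 1 := by
          have := hcol f hf
          rcases hfv with ⟨h1, h2⟩ | ⟨h1, h2⟩ <;> rw [h1, h2] at this
          · exact this
          · rwa [add_comm]
        revert this; generalize col b = p; generalize col v = q; revert p q; decide
    intro e he
    rw [hE', Finset.mem_filter] at he
    simp only [Function.comp]
    rw [h1 _ he.2.1, h1 _ he.2.2]
    exact hcol e he.1
  have star : ∀ {e x y}, e ∈ E → e ∉ E' → Ends s t e x y → π x = b ∧ π y = b ∧ (x = b ∨ y = b) := by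
    intro e x y he he' hxy
    have : x = b ∨ y = b := by
      by_contra! h
      apply he'
      rw [hE', Finset.mem_filter]
      rcases hxy with ⟨h1, h2⟩ | ⟨h1, h2⟩ <;> rw [h1, h2]
      · exact ⟨he, h⟩
      · exact ⟨he, h.symm⟩
    refine ⟨?_, ?_, this⟩ <;> rcases this with rfl | rfl
    · exact hπb
    · exact hπN he hxy.symm
    · exact hπN he hxy
    · exact hπb
  have notb : ∀ {e x y}, e ∈ E' → Ends s t e x y → x ≠ b := by
    intro e x y he hxy
    rw [hE', Finset.mem_filter] at he
    rcases hxy with ⟨h1, -⟩ | ⟨h1, -⟩ <;> rw [← h1]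
    · exact he.2.1
    · exact he.2.2
  -- optimal joins restrict to optimal joins
  have restr_bd : ∀ N ⊆ E, bd (π ∘ s) (π ∘ t) (N ∩ E') = push π (bd s t N) := by
    intro N hN
    rw [← bd_push]
    have h1 : bd (π ∘ s) (π ∘ t) N =
        bd (π ∘ s) (π ∘ t) (N \ E') + bd (π ∘ s) (π ∘ t) (N ∩ E') := by
      rw [← bd_union (Finset.disjoint_sdiff_inter N E'), Finset.sdiff_union_inter]
    have h2 : bd (π ∘ s) (π ∘ t) (N \ E') = 0 := by
      refine Finset.sum_eq_zero fun e he => ?_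
      rw [Finset.mem_sdiff] at he
      obtain ⟨h3, h4, -⟩ := star (hN he.1) he.2 (Or.inl ⟨rfl, rfl⟩)
      simp only [Function.comp, h3, h4]
      exact add_self_fun _
    rw [h1, h2, zero_add]
  have restr_jn : ∀ {x N}, IsJn s t E U x N →
      IsJn (π ∘ s) (π ∘ t) E' (push π U) (π x) (N ∩ E') := by
    intro x N hN
    exact ⟨Finset.inter_subset_right, by rw [restr_bd N hN.1, hN.2, push_add, push_single]⟩
  have restr_opt : ∀ {x N}, Opt s t E U x N →
      Opt (π ∘ s) (π ∘ t) E' (push π U) (π x) (N ∩ E') := by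
    intro x N hN
    refine ⟨restr_jn hN.1, fun J' hJ' => ?_⟩
    set D := symmDiff (N ∩ E') J' with hD
    have hDE' : D ⊆ E' := by
      intro e he
      rcases Finset.mem_symmDiff.1 he with h | h
      · exact (Finset.mem_inter.1 h.1).2
      · exact hJ'.1 h.1
    have hD0 : push π (bd s t D) = 0 := by
      rw [← bd_push, hD, bd_symmDiff, (restr_jn hN.1).2, hJ'.2, add_self_fun]
    have hDb : ∀ e ∈ D, ∀ y, ¬ Ends s t e b y := fun e he y h => notb (hDE' he) h rfl
    have hw : 0 ≤ wt N D := by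
      refine wt_nonneg hcol hM hmin hN D (hDE'.trans hE'E) hDb fun v hv => ?_
      by_contra hcon
      have hvb : v ≠ b := by
        rintro rfl
        obtain ⟨e, he, y, hy⟩ := exists_inc hv
        exact hDb e he y hy
      apply hv
      rw [← push_apply_of_unique π (bd s t D) v ?_, hD0]
      · rfl
      · intro u
        constructor
        · intro h
          rcases hπeq u with h' | ⟨h', -⟩
          · rw [← h', h]
          · exact absurd (h.symm.trans h') hvb
        · rintro rfl
          rcases hπeq u with h' | ⟨-, h'⟩
          · exact h'
          · exact absurd h' hcon
    have hw' : wt N D = wt (N ∩ E') D := by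
      refine Finset.sum_congr rfl fun e he => ?_
      simp [hDE' he]
    have h3 := card_symmDiff_wt (N ∩ E') D
    have h4 : symmDiff (N ∩ E') D = J' := by rw [hD, symmDiff_symmDiff_cancel_left]
    rw [h4] at h3
    omega
  have hMb : ∀ {N}, Opt s t E U b N → ∀ e ∈ N, ∀ y, ¬ Ends s t e b y := by
    intro N hN e he y
    exact no_edge hN.1 (fun z' J' h => (hN.2 _ hM).trans (hmin _ _ h)) he
  have split : ∀ N : Finset ε, N.card = (N \ E').card + (N ∩ E').card := fun N =>
    (Finset.card_sdiff_add_card_inter N E').symm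
  have inc_b : ∀ {e N}, N ⊆ E → e ∈ N \ E' → ∃ y, Ends s t e b y := by
    intro e N hN he
    rw [Finset.mem_sdiff] at he
    rcases (star (hN he.1) he.2 (Or.inl ⟨rfl, rfl⟩)).2.2 with h | h
    · exact ⟨_, Or.inl ⟨h, rfl⟩⟩
    · exact ⟨_, Or.inr ⟨h, rfl⟩⟩
  have card_le : ∀ {x N}, Opt s t E U x N → (N \ E').card ≤ 1 := by
    intro x N hN
    rw [Finset.card_le_one]
    intro e he f hf
    obtain ⟨y, hy⟩ := inc_b hN.1.1 he
    obtain ⟨y', hy'⟩ := inc_b hN.1.1 hf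
    exact at_most_one hM hmin hN (Finset.mem_sdiff.1 he).1 (Finset.mem_sdiff.1 hf).1 hy hy'
  have hMopt : Opt s t E U b M := ⟨hM, fun J' h => hmin _ _ h⟩
  have card_ge : ∀ {x N}, Opt s t E U x N → x ≠ b → 1 ≤ (N \ E').card := by
    intro x N hN hx
    have h1 : bd s t M b = 0 := by
      by_contra h
      obtain ⟨e, he, y, hy⟩ := exists_inc h
      exact hMb hMopt e he y hy
    have h2 : bd s t N b ≠ 0 := by
      intro h
      rw [hM.2] at h1
      rw [hN.1.2] at h
      simp [Ne.symm hx] at h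
      simp [h] at h1
    obtain ⟨e, he, y, hy⟩ := exists_inc h2
    refine Finset.card_pos.2 ⟨e, Finset.mem_sdiff.2 ⟨he, fun h => notb h hy rfl⟩⟩
  -- the star lies inside or outside of `K`
  have hstarK : ∀ {f v}, f ∈ E → Ends s t f b v → (b ∈ K ↔ v ∈ K) := by
    intro f v hf hv
    have hb : Lev s t E U M.card b := ⟨M, hM, le_rfl⟩
    constructor
    · intro h
      refine hK.closed f hf b v hv h ?_
      obtain ⟨N, h1, h2⟩ := lev_step hb hf hv
      exact ⟨N, h1, by omega⟩
    · intro h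
      exact hK.closed f hf v b hv.symm h ⟨M, hM, by omega⟩
  have hπK : ∀ v, π v ∈ K ↔ v ∈ K := by
    intro v
    rcases hπeq v with h | ⟨h, f, hf, hv⟩
    · rw [h]
    · rw [h]; exact hstarK hf hv
  have hππ : ∀ v, π (π v) = π v := by
    intro v
    rcases hπeq v with h | ⟨h, -⟩
    · rw [h, h]
    · rw [h, hπb]
  have hK' : IsComp (π ∘ s) (π ∘ t) E' (push π U) (c - 1) (π '' K) := by
    refine ⟨?_, ?_, ?_⟩
    · rintro _ ⟨x, hx, rfl⟩
      obtain ⟨N₀, h1, h2⟩ := hK.lev x hx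
      obtain ⟨N, h3, h4⟩ := exists_opt h1
      refine ⟨_, restr_jn h3.1, ?_⟩
      have h5 := split N
      by_cases hxb : x = b
      · subst hxb
        have h6 := h3.2 _ hM
        omega
      · have h6 := card_ge h3 hxb
        omega
    · rintro X ⟨_, ⟨x, hx, rfl⟩, hxX⟩ hX
      have := hK.conn (π ⁻¹' X) ⟨x, hx, hxX⟩ (by
        intro e he h1 h2
        by_cases he' : e ∈ E'
        · exact hX e he' ⟨_, h1, rfl⟩ ⟨_, h2, rfl⟩
        · obtain ⟨h3, h4, -⟩ := star he he' (Or.inl ⟨rfl, rfl⟩)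
          simp only [Set.mem_preimage, h3, h4])
      rintro _ ⟨y, hy, rfl⟩
      exact this hy
    · rintro e he x' y' hxy ⟨x₀, hx₀, rfl⟩ ⟨N', hN', hN'c⟩
      obtain ⟨x, y, hxy', hxx, rfl⟩ : ∃ x y, Ends s t e x y ∧ π x = π x₀ ∧ π y = y' := by
        rcases hxy with ⟨h1, h2⟩ | ⟨h1, h2⟩
        · exact ⟨_, _, Or.inl ⟨rfl, rfl⟩, h1, h2⟩
        · exact ⟨_, _, Or.inr ⟨rfl, rfl⟩, h1, h2⟩
      have hx : x ∈ K := by rw [← hπK, hxx, hπK]; exact hx₀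
      refine ⟨y, hK.closed e (hE'E he) x y hxy' hx ?_, rfl⟩
      obtain ⟨N₁, h1, -⟩ := lev_step (hK.lev x hx) (hE'E he) hxy'
      obtain ⟨N, h2, -⟩ := exists_opt h1
      refine ⟨N, h2.1, ?_⟩
      have h3 := (restr_opt h2).2 _ hN'
      have h4 := split N
      have h5 := card_le h2
      omega
  have hfin := ih _ hlt (π ∘ s) (π ∘ t) E' (push π U) _ hcol' _ _ hK' (π z) ⟨z, hz, rfl⟩
    (J ∩ E') (restr_opt hJ) rfl
  intro e he x y hxy hx
  by_cases he' : e ∈ E'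
  · obtain ⟨y₀, hy₀, h⟩ := hfin e (Finset.mem_inter.2 ⟨he, he'⟩) _ _ (hxy.map π) ⟨x, hx, rfl⟩
    rw [← hπK, ← h, hπK]; exact hy₀
  · obtain ⟨h1, h2, -⟩ := star (hJ.1.1 he) he' hxy
    rw [← hπK, h2, ← h1, hπK]; exact hx

/-! ### Exchanging the parts of joins inside a level component -/

/-- If `A` has no edge in the cut of `K`, its parts inside and outside `K` carry the restrictions of its
boundary to `K` and to the complement of `K`. -/
lemma bd_filter_in {s t : ε → V} {K : Set V} [DecidablePred fun e => s e ∈ K ∧ t e ∈ K]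
    {A : Finset ε} (hA : ∀ e ∈ A, ∀ x y, Ends s t e x y → x ∈ K → y ∈ K) :
    (∀ v ∈ K, bd s t (A.filter fun e => s e ∈ K ∧ t e ∈ K) v = bd s t A v) ∧
    (∀ v ∉ K, bd s t (A.filter fun e => s e ∈ K ∧ t e ∈ K) v = 0) ∧
    (∀ v ∈ K, bd s t (A.filter fun e => ¬ (s e ∈ K ∧ t e ∈ K)) v = 0) ∧
    (∀ v ∉ K, bd s t (A.filter fun e => ¬ (s e ∈ K ∧ t e ∈ K)) v = bd s t A v) := by
  have hsum : bd s t A = bd s t (A.filter fun e => s e ∈ K ∧ t e ∈ K) +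
      bd s t (A.filter fun e => ¬ (s e ∈ K ∧ t e ∈ K)) := by
    rw [← bd_union (Finset.disjoint_filter_filter_not _ _ _), Finset.filter_union_filter_not_eq]
  have h1 : ∀ v ∉ K, bd s t (A.filter fun e => s e ∈ K ∧ t e ∈ K) v = 0 := by
    intro v hv
    by_contra h
    obtain ⟨e, he, y, hy⟩ := exists_inc h
    have h2 := (Finset.mem_filter.1 he).2
    rcases hy with ⟨h3, -⟩ | ⟨h3, -⟩
    · exact hv (h3 ▸ h2.1)
    · exact hv (h3 ▸ h2.2)
  have h2 : ∀ v ∈ K, bd s t (A.filter fun e => ¬ (s e ∈ K ∧ t e ∈ K)) v = 0 := by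
    intro v hv
    by_contra h
    obtain ⟨e, he, y, hy⟩ := exists_inc h
    obtain ⟨h2, h3⟩ := Finset.mem_filter.1 he
    have h4 := hA e h2 _ _ hy hv
    rcases hy with ⟨h5, h6⟩ | ⟨h5, h6⟩ <;> apply h3 <;> rw [h5, h6]
    · exact ⟨hv, h4⟩
    · exact ⟨h4, hv⟩
  refine ⟨fun v hv => ?_, h1, h2, fun v hv => ?_⟩
  · rw [hsum, Pi.add_apply, h2 v hv, add_zero]
  · rw [hsum, Pi.add_apply, h1 v hv, zero_add]

/-- The part of `A` outside `K` together with the part of `B` inside `K` is a join with the root of `B`. -/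
lemma swap_isJn {s t : ε → V} {E : Finset ε} {U : V → ZMod 2} {K : Set V}
    [DecidablePred fun e => s e ∈ K ∧ t e ∈ K] {x y : V} {A B : Finset ε}
    (hA : IsJn s t E U x A) (hB : IsJn s t E U y B) (hx : x ∈ K) (hy : y ∈ K)
    (hAK : ∀ e ∈ A, ∀ x y, Ends s t e x y → x ∈ K → y ∈ K)
    (hBK : ∀ e ∈ B, ∀ x y, Ends s t e x y → x ∈ K → y ∈ K) :
    IsJn s t E U y ((A.filter fun e => ¬ (s e ∈ K ∧ t e ∈ K)) ∪
      (B.filter fun e => s e ∈ K ∧ t e ∈ K)) ∧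
    ((A.filter fun e => ¬ (s e ∈ K ∧ t e ∈ K)) ∪ (B.filter fun e => s e ∈ K ∧ t e ∈ K)).card =
      (A.filter fun e => ¬ (s e ∈ K ∧ t e ∈ K)).card +
        (B.filter fun e => s e ∈ K ∧ t e ∈ K).card := by
  have hd : Disjoint (A.filter fun e => ¬ (s e ∈ K ∧ t e ∈ K))
      (B.filter fun e => s e ∈ K ∧ t e ∈ K) := by
    rw [Finset.disjoint_left]
    intro e h1 h2
    exact (Finset.mem_filter.1 h1).2 (Finset.mem_filter.1 h2).2
  refine ⟨⟨Finset.union_subset ((Finset.filter_subset _ _).trans hA.1)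
    ((Finset.filter_subset _ _).trans hB.1), ?_⟩, Finset.card_union_of_disjoint hd⟩
  rw [bd_union hd]
  ext v
  obtain ⟨-, -, a1, a2⟩ := bd_filter_in hAK
  obtain ⟨b1, b2, -, -⟩ := bd_filter_in hBK
  by_cases hv : v ∈ K
  · rw [Pi.add_apply, a1 v hv, b1 v hv, zero_add, hB.2]
  · have h1 : v ≠ x := fun h => hv (h ▸ hx)
    have h2 : v ≠ y := fun h => hv (h ▸ hy)
    rw [Pi.add_apply, a2 v hv, b2 v hv, add_zero, hA.2]
    simp [h1, h2]

/-- The beam `e₀` of `K` has end `k₀` in `K`, and `x ∈ K` has a neighbour outside `K`. Then some set `D`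
of edges inside `K` has boundary `{x, k₀}` and `F`-weight `0`, namely the part inside `K` of `M ∆ F`
for a minimum `x`-join `M`. -/
theorem inner_diff [Fintype V] (s t : ε → V) (E : Finset ε) (U : V → ZMod 2) (col : V → ZMod 2)
    (hcol : ∀ e ∈ E, col (s e) + col (t e) = 1) (c : ℕ) (K : Set V) (hK : IsComp s t E U c K)
    (r : V) (hr : r ∉ K) (F : Finset ε) (hF : Opt s t E U r F)
    (e₀ : ε) (he₀ : e₀ ∈ F) (k₀ l₀ : V) (hends : Ends s t e₀ k₀ l₀) (hk₀ : k₀ ∈ K) (hl₀ : l₀ ∉ K)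
    (x : V) (hx : x ∈ K) (f : ε) (hfE : f ∈ E) (y : V) (hfxy : Ends s t f x y) (hy : y ∉ K) :
    ∃ D ⊆ E, bd s t D = Pi.single x 1 + Pi.single k₀ 1 ∧ wt F D = 0 ∧
      ∀ e ∈ D, s e ∈ K ∧ t e ∈ K := by
  classical
  have cut : ∀ {z J}, z ∈ K → Opt s t E U z J → ∀ e ∈ J, ∀ x y, Ends s t e x y → x ∈ K → y ∈ K :=
    fun {z J} hz hJ => cut_empty s t E U col hcol c K hK z hz J hJ
  -- a vertex of `K` with a neighbour outside `K` has level exactly `c`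
  have level : ∀ {z J}, z ∈ K → Opt s t E U z J → ∀ e ∈ E, ∀ y ∉ K, Ends s t e z y → J.card = c := by
    intro z J hz hJ e he y hy h
    obtain ⟨J', h1, h2⟩ := hK.lev z hz
    have h3 := (hJ.2 _ h1).trans h2
    by_contra hne
    obtain ⟨N, h4, h5⟩ := lev_step (c := J.card) ⟨J, hJ.1, le_rfl⟩ he h
    exact hy (hK.closed e he z y h hz ⟨N, h4, by omega⟩)
  have card_split : ∀ A : Finset ε, A.card = (A.filter fun e => ¬ (s e ∈ K ∧ t e ∈ K)).card +
      (A.filter fun e => s e ∈ K ∧ t e ∈ K).card := by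
    intro A
    rw [add_comm, Finset.card_filter_add_card_filter_not]
  -- all minimum joins rooted in `K` have equally many edges outside `K`
  have outer : ∀ {z z' A B}, z ∈ K → z' ∈ K → Opt s t E U z A → Opt s t E U z' B →
      (A.filter fun e => ¬ (s e ∈ K ∧ t e ∈ K)).card ≤
        (B.filter fun e => ¬ (s e ∈ K ∧ t e ∈ K)).card := by
    intro z z' A B hz hz' hA hB
    obtain ⟨h1, h2⟩ := swap_isJn hB.1 hA.1 hz' hz (cut hz' hB) (cut hz hA)
    have h3 := hA.2 _ h1
    have h4 := card_split A
    omega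
  obtain ⟨M₀, hM₀, -⟩ := hK.lev x hx
  obtain ⟨M, hM, -⟩ := exists_opt hM₀
  have hD := bd_join_diff hM.1 hF.1
  have hrx : r ≠ x := fun h => hr (h ▸ hx)
  obtain ⟨P, hPD, k, hk, hbP, e₁, he₁, l, hkl, hl, hall⟩ := trail s t K (symmDiff M F) r hr
    (by rw [hD]; simp [hrx])
    (by intro v hv
        by_contra! hc
        have h1 : v ≠ x := fun h => hc.1 (h ▸ hx)
        apply hv
        rw [hD]; simp [hc.2, h1])
  have hPE : P ⊆ E := fun e he => by
    rcases Finset.mem_symmDiff.1 (hPD he) with h | h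
    · exact hM.1.1 h.1
    · exact hF.1.1 h.1
  have hPout : ∀ e ∈ P, ¬ (s e ∈ K ∧ t e ∈ K) := by
    rintro e he ⟨h1, h2⟩
    by_cases h : e = e₁
    · subst h
      rcases hkl with ⟨-, h3⟩ | ⟨-, h3⟩
      · exact hl (h3 ▸ h2)
      · exact hl (h3 ▸ h1)
    · exact (hall e he h).1 h1
  obtain ⟨N₀, hN₀, -⟩ := hK.lev k hk
  obtain ⟨N, hN, -⟩ := exists_opt hN₀
  obtain ⟨hM₁, hM₁c⟩ := swap_isJn hM.1 hN.1 hx hk (cut hx hM) (cut hk hN)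
  set M₁ := (M.filter fun e => ¬ (s e ∈ K ∧ t e ∈ K)) ∪
      (N.filter fun e => s e ∈ K ∧ t e ∈ K) with hM₁def
  have hM₁N : M₁.card ≤ N.card := by
    have h1 := outer hx hk hM hN
    have h2 := card_split N
    omega
  -- `M₁` is a minimum `k`-join agreeing with `M` outside `K`, in particular along `P`
  have hwt : wt M₁ P = - wt F P := by
    rw [← wt_neg hPD]
    refine Finset.sum_congr rfl fun e he => ?_
    have : e ∈ M₁ ↔ e ∈ M := by
      have := hPout e he
      simp only [hM₁def, Finset.mem_union, Finset.mem_filter]; tauto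
    simp [this]
  have hQj := hF.1.sd hPE hbP
  have hM₁P := hF.2 _ (hM₁.sd hPE (hbP.trans (add_comm _ _)))
  have c1 := card_symmDiff_wt F P
  have c2 := card_symmDiff_wt M₁ P
  have hQ : Opt s t E U k (symmDiff F P) := by
    refine ⟨hQj, fun J' hJ' => ?_⟩
    have := hN.2 _ hJ'
    omega
  -- otherwise the minimum `k`-join `F ∆ P` would still contain the cut edge `e₀`
  have he₀P : e₀ ∈ P := by
    by_contra h
    exact hl₀ (cut hk hQ e₀ (Finset.mem_symmDiff.2 (Or.inl ⟨he₀, h⟩)) _ _ hends hk₀)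
  have he₀₁ : e₀ = e₁ := by
    by_contra h
    have := hall e₀ he₀P h
    rcases hends with ⟨h1, -⟩ | ⟨h1, -⟩
    · exact this.1 (h1 ▸ hk₀)
    · exact this.2 (h1 ▸ hk₀)
  obtain rfl : k = k₀ := by
    subst he₀₁
    rcases hends with ⟨h1, h2⟩ | ⟨h1, h2⟩ <;> rcases hkl with ⟨h3, h4⟩ | ⟨h3, h4⟩
    · rw [← h1, ← h3]
    · exact absurd (h4 ▸ h1 ▸ hk₀) hl
    · exact absurd (h4 ▸ h1 ▸ hk₀) hl
    · rw [← h1, ← h3]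
  have hQF : ((symmDiff F P).filter fun e => s e ∈ K ∧ t e ∈ K) =
      F.filter fun e => s e ∈ K ∧ t e ∈ K := by
    ext e
    have := hPout e
    simp only [Finset.mem_filter, Finset.mem_symmDiff]; tauto
  have hcards : (M.filter fun e => s e ∈ K ∧ t e ∈ K).card =
      (F.filter fun e => s e ∈ K ∧ t e ∈ K).card := by
    rw [← hQF]
    have h1 := outer hx hk hM hQ
    have h2 := outer hk hx hQ hM
    have h3 := card_split M
    have h4 := card_split (symmDiff F P)
    have h5 := level hx hM f hfE y hy hfxy
    have h6 := level hk hQ e₀ (hF.1.1 he₀) l₀ hl₀ hends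
    omega
  have hDin : ∀ e ∈ symmDiff (F.filter fun e => s e ∈ K ∧ t e ∈ K)
      (M.filter fun e => s e ∈ K ∧ t e ∈ K), s e ∈ K ∧ t e ∈ K := by
    intro e he
    rcases Finset.mem_symmDiff.1 he with h | h
    · exact (Finset.mem_filter.1 h.1).2
    · exact (Finset.mem_filter.1 h.1).2
  refine ⟨symmDiff (F.filter fun e => s e ∈ K ∧ t e ∈ K) (M.filter fun e => s e ∈ K ∧ t e ∈ K),
    ?_, ?_, ?_, hDin⟩
  · intro e he
    rcases Finset.mem_symmDiff.1 he with h | h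
    · exact hF.1.1 (Finset.mem_filter.1 h.1).1
    · exact hM.1.1 (Finset.mem_filter.1 h.1).1
  · rw [bd_symmDiff, ← hQF]
    obtain ⟨a1, a2, -, -⟩ := bd_filter_in (cut hk hQ)
    obtain ⟨b1, b2, -, -⟩ := bd_filter_in (cut hx hM)
    ext v
    by_cases hv : v ∈ K
    · rw [Pi.add_apply, a1 v hv, b1 v hv, hQ.1.2, hM.1.2, ← Pi.add_apply]
      refine congrFun ?_ v
      calc _ = (U + U) + (Pi.single x 1 + Pi.single k 1) := by abel
        _ = _ := by rw [add_self_fun, zero_add]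
    · have h1 : v ≠ x := fun h => hv (h ▸ hx)
      have h2 : v ≠ k := fun h => hv (h ▸ hk)
      rw [Pi.add_apply, a2 v hv, b2 v hv]
      simp [h1, h2]
  · have h1 := card_symmDiff_wt (F.filter fun e => s e ∈ K ∧ t e ∈ K)
      (symmDiff (F.filter fun e => s e ∈ K ∧ t e ∈ K) (M.filter fun e => s e ∈ K ∧ t e ∈ K))
    rw [symmDiff_symmDiff_cancel_left, hcards] at h1
    have h2 : wt F (symmDiff (F.filter fun e => s e ∈ K ∧ t e ∈ K)
        (M.filter fun e => s e ∈ K ∧ t e ∈ K)) = wt (F.filter fun e => s e ∈ K ∧ t e ∈ K)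
        (symmDiff (F.filter fun e => s e ∈ K ∧ t e ∈ K)
          (M.filter fun e => s e ∈ K ∧ t e ∈ K)) := by
      refine Finset.sum_congr rfl fun e he => ?_
      simp [hDin e he]
    omega

end Abstract

/-! ### Simple graphs as multigraphs -/

section Concrete

variable {V : Type*} [DecidableEq V]

/-- The first end of an edge, for an arbitrarily chosen orientation. -/
noncomputable def src (e : Sym2 V) : V := (Quot.out e).1
/-- The second end of an edge, for the orientation chosen in `src`. -/
noncomputable def tgt (e : Sym2 V) : V := (Quot.out e).2

omit [DecidableEq V] in
lemma mk_src_tgt (e : Sym2 V) : s(src e, tgt e) = e := Quot.out_eq e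

omit [DecidableEq V] in
lemma ends_iff (e : Sym2 V) (x y : V) : Ends src tgt e x y ↔ e = s(x, y) := by
  conv_rhs => rw [← mk_src_tgt e]
  rw [Sym2.eq_iff, Ends]; tauto

open Classical in
/-- The indicator function of `T` over `𝔽₂`. -/
noncomputable def ind (T : Set V) : V → ZMod 2 := fun v => if v ∈ T then 1 else 0

lemma bd_apply_eq {G : SimpleGraph V} {J : Finset (Sym2 V)} (hJ : (J : Set (Sym2 V)) ⊆ G.edgeSet)
    (v : V) : bd src tgt J v = ((J.filter fun e => v ∈ e).card : ZMod 2) := by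
  rw [bd, Finset.sum_apply, Finset.card_filter]
  push_cast
  refine Finset.sum_congr rfl fun e he => ?_
  have h1 : G.Adj (src e) (tgt e) := by
    rw [← SimpleGraph.mem_edgeSet, mk_src_tgt]; exact hJ he
  have h2 := h1.ne
  have h3 : v ∈ e ↔ v = src e ∨ v = tgt e := by
    conv_lhs => rw [← mk_src_tgt e]
    exact Sym2.mem_iff
  simp only [Pi.add_apply, Pi.single_apply, h3]
  by_cases h4 : v = src e
  · subst h4; simp [h2]
  · by_cases h5 : v = tgt e
    · simp [h5, h2.symm]
    · simp [h4, h5]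

lemma isJoin_iff {G : SimpleGraph V} {T : Set V} {J : Finset (Sym2 V)} :
    IsJoin G T (J : Set (Sym2 V)) ↔ (J : Set (Sym2 V)) ⊆ G.edgeSet ∧ bd src tgt J = ind T := by
  refine and_congr_right fun hJ => ?_
  rw [funext_iff]
  refine forall_congr' fun v => ?_
  have h1 : {e ∈ (J : Set (Sym2 V)) | v ∈ e} = ((J.filter fun e => v ∈ e : Finset (Sym2 V)) : Set _) := by
    ext e; simp
  rw [h1, Set.ncard_coe_finset, bd_apply_eq hJ, ind, ← ZMod.natCast_eq_one_iff_odd]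
  have h2 : ∀ a : ZMod 2, a = 0 ∨ a = 1 := by decide
  rcases h2 ((J.filter fun e => v ∈ e).card : ZMod 2) with h | h <;> rw [h] <;> split_ifs with h3 <;>
    simp [h3]

lemma bd_trail {G : SimpleGraph V} {x y : V} (p : G.Walk x y) (hp : p.IsTrail) :
    bd src tgt p.edges.toFinset = Pi.single x 1 + Pi.single y 1 := by
  induction p with
  | nil => simp [bd, add_self_fun]
  | @cons u v w h p ih =>
    rw [SimpleGraph.Walk.isTrail_cons] at hp
    rw [SimpleGraph.Walk.edges_cons, List.toFinset_cons, Finset.insert_eq,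
      bd_union (by simpa using hp.2), ih hp.1, bd_singleton ((ends_iff _ u v).2 rfl)]
    calc _ = Pi.single u 1 + (Pi.single v 1 + Pi.single v 1) + Pi.single w 1 := by abel
      _ = _ := by rw [add_self_fun, add_zero]

lemma walkWt_trail {G : SimpleGraph V} {F : Set (Sym2 V)} {F' : Finset (Sym2 V)}
    (hF : (F' : Set (Sym2 V)) = F) {x y : V} (p : G.Walk x y) (hp : p.IsTrail) :
    walkWt F p = wt F' p.edges.toFinset := by
  rw [walkWt, wt, ← List.sum_toFinset _ hp.edges_nodup]
  refine Finset.sum_congr rfl fun e _ => ?_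
  simp [edgeWt, ← hF]

lemma exists_walk {G : SimpleGraph V} (X : Finset (Sym2 V)) (hX : (X : Set (Sym2 V)) ⊆ G.edgeSet)
    (x y : V) (h : bd src tgt X = Pi.single x 1 + Pi.single y 1) :
    ∃ p : G.Walk x y, ∀ e ∈ p.edges, e ∈ X := by
  induction hn : X.card generalizing X x with
  | zero =>
    by_cases hxy : x = y
    · subst hxy; exact ⟨.nil, by simp⟩
    · have := congrFun h x
      rw [Finset.card_eq_zero.1 hn] at this
      simp [bd, hxy] at this
  | succ n ih =>
    by_cases hxy : x = y
    · subst hxy; exact ⟨.nil, by simp⟩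
    · obtain ⟨e, he, z, hz⟩ := exists_inc (s := src) (t := tgt) (D := X) (w := x)
        (by rw [h]; simp [hxy])
      have hb : bd src tgt X = Pi.single x 1 + Pi.single z 1 + bd src tgt (X.erase e) := by
        rw [← bd_singleton hz, ← bd_union (by simp), ← Finset.insert_eq, Finset.insert_erase he]
      have hb' : bd src tgt (X.erase e) = Pi.single z 1 + Pi.single y 1 := by
        calc _ = (Pi.single x 1 + Pi.single x 1) + (Pi.single z 1 + Pi.single z 1)
              + bd src tgt (X.erase e) := by simp only [add_self_fun, zero_add]
          _ = Pi.single x 1 + Pi.single z 1 + (Pi.single x 1 + Pi.single z 1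
              + bd src tgt (X.erase e)) := by abel
          _ = Pi.single x 1 + Pi.single z 1 + (Pi.single x 1 + Pi.single y 1) := by rw [← hb, h]
          _ = (Pi.single x 1 + Pi.single x 1) + (Pi.single z 1 + Pi.single y 1) := by abel
          _ = _ := by rw [add_self_fun, zero_add]
      obtain ⟨p, hp⟩ := ih (X.erase e)
        (fun f hf => hX (Finset.mem_of_mem_erase (Finset.mem_coe.1 hf))) z hb'
        (by rw [Finset.card_erase_of_mem he, hn]; rfl)
      have hadj : G.Adj x z := by
        rw [← SimpleGraph.mem_edgeSet, ← (ends_iff e x z).1 hz]; exact hX he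
      refine ⟨.cons hadj p, ?_⟩
      intro f hf
      rw [SimpleGraph.Walk.edges_cons, List.mem_cons] at hf
      rcases hf with rfl | hf
      · rw [← (ends_iff e x z).1 hz]; exact he
      · exact Finset.mem_of_mem_erase (hp f hf)

lemma bddBelow_wt [Fintype V] (G : SimpleGraph V) (F : Set (Sym2 V)) (x y : V) :
    BddBelow {n : ℤ | ∃ p : G.Walk x y, p.IsPath ∧ walkWt F p = n} := by
  classical
  refine ⟨-(F.toFinset.card : ℤ), ?_⟩
  rintro _ ⟨p, hp, rfl⟩
  rw [walkWt_trail (F' := F.toFinset) (by simp) p hp.isTrail]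
  have := card_symmDiff_wt F.toFinset p.edges.toFinset
  omega

/-- When `F` is conservative (every edge set with zero boundary has nonnegative weight), the weight of
any edge set with boundary `{x, y}` bounds the distance from above. -/
lemma distF_le [Fintype V] {G : SimpleGraph V} {F : Set (Sym2 V)} {F' : Finset (Sym2 V)}
    (hF : (F' : Set (Sym2 V)) = F)
    (hcons : ∀ X : Finset (Sym2 V), (X : Set (Sym2 V)) ⊆ G.edgeSet → bd src tgt X = 0 → 0 ≤ wt F' X)
    {X : Finset (Sym2 V)} (hX : (X : Set (Sym2 V)) ⊆ G.edgeSet) {x y : V}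
    (h : bd src tgt X = Pi.single x 1 + Pi.single y 1) : distF G F x y ≤ wt F' X := by
  obtain ⟨p, hp⟩ := exists_walk X hX x y h
  have hq := p.bypass_isPath
  have hqX : p.bypass.edges.toFinset ⊆ X := by
    intro e he
    exact hp e (p.edges_bypass_subset_edges (List.mem_toFinset.1 he))
  have h1 : distF G F x y ≤ walkWt F p.bypass :=
    csInf_le (bddBelow_wt G F x y) ⟨_, hq, rfl⟩
  rw [walkWt_trail hF _ hq.isTrail] at h1
  have h2 : wt F' X = wt F' (X \ p.bypass.edges.toFinset) + wt F' p.bypass.edges.toFinset := by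
    rw [← wt_union Finset.sdiff_disjoint, Finset.sdiff_union_of_subset hqX]
  have h3 : bd src tgt X = bd src tgt (X \ p.bypass.edges.toFinset) +
      bd src tgt p.bypass.edges.toFinset := by
    rw [← bd_union Finset.sdiff_disjoint, Finset.sdiff_union_of_subset hqX]
  have h4 := hcons (X \ p.bypass.edges.toFinset)
    (fun e he => hX (Finset.mem_sdiff.1 (Finset.mem_coe.1 he)).1) (by
      rw [bd_trail _ hq.isTrail, h] at h3
      exact right_eq_add.1 h3)
  omega

lemma distF_attained [Fintype V] {G : SimpleGraph V} (F : Set (Sym2 V)) {x y : V}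
    (h : G.Reachable x y) : ∃ p : G.Walk x y, p.IsPath ∧ walkWt F p = distF G F x y := by
  obtain ⟨p⟩ := h
  exact Int.csInf_mem (s := {n : ℤ | ∃ p : G.Walk x y, p.IsPath ∧ walkWt F p = n})
    ⟨_, p.bypass, p.bypass_isPath, rfl⟩ (bddBelow_wt G F x y)

omit [DecidableEq V] in
/-- The infimum defining `distF` is then over the empty set, so it takes the default value `0`. -/
lemma distF_unreachable {G : SimpleGraph V} (F : Set (Sym2 V)) {x y : V}
    (h : ¬ G.Reachable x y) : distF G F x y = 0 := by
  have : {n : ℤ | ∃ p : G.Walk x y, p.IsPath ∧ walkWt F p = n} = ∅ := by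
    ext n; simp only [Set.mem_ofPred_eq, Set.mem_empty_iff_false, iff_false]
    rintro ⟨p, -⟩; exact h ⟨p⟩
  rw [distF, this, Int.csInf_empty]

end Concrete

/-- For a bipartite graft `(G, T)`, a minimum join `F`, a decapital
distance component `K` w.r.t. `r` with `F`-beam `s(rK, sK)` (`F`-root `rK`,
`F`-antiroot `sK`), a vertex `r' ∉ K`, and a path `P` from `r'` to `x ∈ K` with
`V(P) ∩ K = {x}`, we have `w_F(P) ≥ dist_F(r', rK)`. -/
theorem stmt_0 {V : Type*} [Fintype V] [DecidableEq V]
    (G : SimpleGraph V) (T : Set V) (hbip : G.Colorable 2) (hgraft : IsGraft G T)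
    (F : Set (Sym2 V)) (hF : IsMinJoin G T F)
    (r : V) (K : Set V) (hK : IsDecapDistComp G F r K)
    (rK sK : V) (hadj : G.Adj rK sK) (hbeam : s(rK, sK) ∈ F)
    (hrK : rK ∈ K) (hsK : sK ∉ K)
    (r' : V) (hr' : r' ∉ K)
    (x : V) (hx : x ∈ K)
    (P : G.Walk r' x) (hP : P.IsPath)
    (hPK : {v | v ∈ P.support} ∩ K = {x}) :
    distF G F r' rK ≤ walkWt F P := by
  classical
  obtain ⟨i, ⟨-, hKne, hKsub, hKconn, hKcl⟩, hrK'⟩ := hK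
  obtain ⟨F', rfl⟩ : ∃ F' : Finset (Sym2 V), (F' : Set (Sym2 V)) = F :=
    ⟨F.toFinset, by simp⟩
  set E : Finset (Sym2 V) := G.edgeSet.toFinset with hEdef
  have hE : ∀ {X : Finset (Sym2 V)}, (X : Set (Sym2 V)) ⊆ G.edgeSet ↔ X ⊆ E := by
    intro X
    rw [hEdef, ← Finset.coe_subset]; simp
  set U : V → ZMod 2 := ind T + Pi.single r 1 with hU
  have hUr : U + Pi.single r 1 = ind T := by rw [hU, add_assoc, add_self_fun, add_zero]
  have hFj := isJoin_iff.1 hF.1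
  have hFo : Opt src tgt E U r F' := by
    refine ⟨⟨hE.1 hFj.1, by rw [hUr, hFj.2]⟩, fun J' hJ' => ?_⟩
    have h1 : nu G T ≤ J'.card := Nat.sInf_le
      ⟨(J' : Set (Sym2 V)), isJoin_iff.2 ⟨hE.2 hJ'.1, by rw [hJ'.2, hUr]⟩, Set.ncard_coe_finset _⟩
    have h2 := hF.2
    rw [Set.ncard_coe_finset] at h2
    omega
  have hcons : ∀ X : Finset (Sym2 V), (X : Set (Sym2 V)) ⊆ G.edgeSet → bd src tgt X = 0 →
      0 ≤ wt F' X := by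
    intro X hX h0
    have h1 := hFo.2 _ (hFo.1.sd0 (hE.1 hX) h0)
    have h2 := card_symmDiff_wt F' X
    omega
  obtain ⟨C⟩ := hbip
  have hcol : ∀ e ∈ E, ((C (src e)).val : ZMod 2) + ((C (tgt e)).val : ZMod 2) = 1 := by
    intro e he
    have h1 : G.Adj (src e) (tgt e) := by
      rw [← SimpleGraph.mem_edgeSet, mk_src_tgt]; simpa [hEdef] using he
    have h2 := C.valid h1
    revert h2
    generalize C (src e) = a
    generalize C (tgt e) = b
    revert a b
    decide
  have hKreach : ∀ z ∈ K, G.Reachable rK z := by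
    intro z hz
    have := hKconn.preconnected ⟨rK, hrK⟩ ⟨z, hz⟩
    exact this.map (SimpleGraph.Embedding.induce K).toHom
  -- Vertices that `r` does not reach are assigned `distF` equal to `0`. If `rK` were one, so would
  -- be `sK`, and `sK` would belong to the same distance component.
  have hrrK : G.Reachable r rK := by
    by_contra hn
    have hn' : ¬ G.Reachable r sK := fun h => hn (h.trans hadj.symm.reachable)
    refine hsK (hKcl rK hrK sK ?_ hadj)
    have h1 : distF G (F' : Set (Sym2 V)) r rK ≤ i := hKsub hrK
    rw [distF_unreachable _ hn] at h1
    show distF G (F' : Set (Sym2 V)) r sK ≤ i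
    rwa [distF_unreachable _ hn']
  -- a vertex of `K` has a join of size at most `|F| + i`
  have lev1 : ∀ z ∈ K, ∃ J, IsJn src tgt E U z J ∧ (J.card : ℤ) ≤ F'.card + i := by
    intro z hz
    obtain ⟨p, hp, hpd⟩ := distF_attained (F' : Set (Sym2 V)) (hrrK.trans (hKreach z hz))
    have hpE : p.edges.toFinset ⊆ E := by
      intro e he
      simpa [hEdef] using p.edges_subset_edgeSet (List.mem_toFinset.1 he)
    refine ⟨_, hFo.1.sd hpE (bd_trail p hp.isTrail), ?_⟩
    rw [card_symmDiff_wt, ← walkWt_trail rfl p hp.isTrail, hpd]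
    have : distF G (F' : Set (Sym2 V)) r z ≤ i := hKsub hz
    omega
  have hci : (((F'.card + i : ℤ).toNat : ℕ) : ℤ) = F'.card + i := by
    obtain ⟨J, -, h⟩ := lev1 rK hrK
    omega
  have hcomp : IsComp src tgt E U (F'.card + i : ℤ).toNat K := by
    refine ⟨fun z hz => ?_, ?_, ?_⟩
    · obtain ⟨J, h1, h2⟩ := lev1 z hz
      exact ⟨J, h1, by omega⟩
    · rintro X ⟨x₀, hx₀, hx₀X⟩ hX y hy
      have step : ∀ a b : K, (G.induce K).Adj a b → (a : V) ∈ X → (b : V) ∈ X := by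
        intro a b hab ha
        have hab' : G.Adj a b := hab
        have hends : Ends src tgt s((a : V), (b : V)) a b := (ends_iff _ _ _).2 rfl
        have he : s((a : V), (b : V)) ∈ E := by simpa [hEdef] using hab'
        rcases hends with ⟨h1, h2⟩ | ⟨h1, h2⟩
        · have := hX _ he (by rw [h1]; exact a.2) (by rw [h2]; exact b.2)
          rw [h1, h2] at this; exact this.1 ha
        · have := hX _ he (by rw [h2]; exact b.2) (by rw [h1]; exact a.2)
          rw [h1, h2] at this; exact this.2 ha
      obtain ⟨p⟩ := hKconn.preconnected ⟨x₀, hx₀⟩ ⟨y, hy⟩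
      have : ∀ {a b : K}, (G.induce K).Walk a b → (a : V) ∈ X → (b : V) ∈ X := by
        intro a b p
        induction p with
        | nil => exact id
        | cons h p ih => exact fun ha => ih (step _ _ h ha)
      exact this p hx₀X
    · rintro e he a b hab ha ⟨J, hJ, hJc⟩
      have hab' : G.Adj a b := by
        rw [← SimpleGraph.mem_edgeSet, ← (ends_iff e a b).1 hab]; simpa [hEdef] using he
      refine hKcl a ha b ?_ hab'
      have h1 := bd_join_diff hFo.1 hJ
      have h2 : symmDiff F' J ⊆ E := by
        intro e he
        rcases Finset.mem_symmDiff.1 he with h | h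
        · exact hFo.1.1 h.1
        · exact hJ.1 h.1
      have h3 := distF_le rfl hcons (hE.2 h2) (h1.trans (add_comm _ _))
      have h4 := card_symmDiff_wt F' (symmDiff F' J)
      rw [symmDiff_symmDiff_cancel_left] at h4
      show distF G (F' : Set (Sym2 V)) r b ≤ i
      omega
  -- the last edge of `P` enters `K`
  have honly : ∀ v ∈ P.support, v ∈ K → v = x := by
    intro v hv hvK
    have : v ∈ ({x} : Set V) := hPK ▸ ⟨hv, hvK⟩
    exact this
  have hnil : ¬ P.Nil := fun h => hr' (h.eq ▸ hx)
  have hpen : G.Adj P.penultimate x := P.adj_penultimate hnil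
  have hpenK : P.penultimate ∉ K := fun h =>
    hpen.ne (honly _ (P.getVert_mem_support _) h)
  obtain ⟨D, hDE, hbD, hwD, hDK⟩ := inner_diff src tgt E U (fun v => ((C v).val : ZMod 2)) hcol _ K
    hcomp r hrK' F' hFo s(rK, sK) (Finset.mem_coe.1 hbeam) rK sK ((ends_iff _ _ _).2 rfl) hrK hsK
    x hx s(x, P.penultimate) (by simpa [hEdef] using hpen.symm) P.penultimate
    ((ends_iff _ _ _).2 rfl) hpenK
  -- an edge in both would have two distinct ends in `K`, but `P` meets `K` only in `x`
  have hPD : Disjoint P.edges.toFinset D := by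
    rw [Finset.disjoint_left]
    intro e he heD
    have he := List.mem_toFinset.1 he
    obtain ⟨h1, h2⟩ := hDK e heD
    have hadj' : G.Adj (src e) (tgt e) := by
      rw [← SimpleGraph.mem_edgeSet, mk_src_tgt]; exact P.edges_subset_edgeSet he
    rw [← mk_src_tgt e] at he
    exact hadj'.ne ((honly _ (P.fst_mem_support_of_mem_edges he) h1).trans
      (honly _ (P.snd_mem_support_of_mem_edges he) h2).symm)
  have hXE : P.edges.toFinset ∪ D ⊆ E := by
    refine Finset.union_subset (fun e he => ?_) hDE
    simpa [hEdef] using P.edges_subset_edgeSet (List.mem_toFinset.1 he)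
  have hbX : bd src tgt (P.edges.toFinset ∪ D) = Pi.single r' 1 + Pi.single rK 1 := by
    rw [bd_union hPD, bd_trail P hP.isTrail, hbD]
    calc _ = Pi.single r' 1 + (Pi.single x 1 + Pi.single x 1) + Pi.single rK 1 := by abel
      _ = _ := by rw [add_self_fun, add_zero]
  have hfinal := distF_le rfl hcons (hE.2 hXE) hbX
  rwa [wt_union hPD, hwD, add_zero, ← walkWt_trail rfl P hP.isTrail] at hfinal
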